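/- arXiv:1703.10681 — 4 statements merged into one kernel-verified Lean document; each statement's English description precedes it below -/
import Mathlib

section
/- Fix γ ∈ (0,1]. Compute the greedy order a_1, …, a_n with respect to the true costs c, and suppose k ∈ {1, …, n} satisfies c_{a_k} · v(S_k) > γ · B · m_{a_k}(S_{k−1}). Then (1 + 1/γ) · v(S_{k−1}) + (1/γ) · v({i*}) ≥ opt(A, B). -/
open Classical

/-- Marginal value `m_i(S) = v(S ∪ {i}) - v(S)`. -/
noncomputable def marg {ι : Type*} [DecidableEq ι] (v : Finset ι → ℝ) (S : Finset ι) (i : ι) : ℝ :=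
  v (insert i S) - v S

/-- The next agent in the greedy order once the set `S` has been selected:
an agent of `Sᶜ` maximizing marginal value over bid, ties broken by the fixed linear order. -/
noncomputable def pick {ι : Type*} [Fintype ι] [LinearOrder ι] [Nonempty ι]
    (v : Finset ι → ℝ) (b : ι → ℝ) (S : Finset ι) : ι :=
  if h : Sᶜ.Nonempty then
    (Sᶜ.filter fun j => ∀ j' ∈ Sᶜ, marg v S j' / b j' ≤ marg v S j / b j).min'
      (by
        obtain ⟨j, hj, hmax⟩ := Finset.exists_max_image Sᶜ (fun j => marg v S j / b j) h
        exact ⟨j, Finset.mem_filter.mpr ⟨hj, hmax⟩⟩)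
  else Classical.arbitrary ι

/-- `greedySet v b t` is the set `S_t` of the first `t` agents in the greedy order
computed with respect to the bid vector `b`. -/
noncomputable def greedySet {ι : Type*} [Fintype ι] [LinearOrder ι] [Nonempty ι]
    (v : Finset ι → ℝ) (b : ι → ℝ) : ℕ → Finset ι
  | 0 => ∅
  | t + 1 => insert (pick v b (greedySet v b t)) (greedySet v b t)

/-- `agent v b k` is the `k`-th agent `a_k` in the greedy order (1-indexed). -/
noncomputable def agent {ι : Type*} [Fintype ι] [LinearOrder ι] [Nonempty ι]
    (v : Finset ι → ℝ) (b : ι → ℝ) (k : ℕ) : ι :=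
  pick v b (greedySet v b (k - 1))

/-- `optVal v b B A'` is the maximum of `v S` over `S ⊆ A'` with `∑_{i ∈ S} b i ≤ B`. -/
noncomputable def optVal {ι : Type*} (v : Finset ι → ℝ) (b : ι → ℝ) (B : ℝ)
    (A' : Finset ι) : ℝ :=
  sSup (v '' {S : Finset ι | S ⊆ A' ∧ ∑ i ∈ S, b i ≤ B})

/-- The greedy threshold mechanism `Greedy-TM(γ, b)`: it outputs `S_{k-1}` where `k` is the
least index with `b_{a_k} · v(S_k) > γ · B · m_{a_k}(S_{k-1})`, and all of `A` if no such `k`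
exists. -/
noncomputable def greedyTM {ι : Type*} [Fintype ι] [LinearOrder ι] [Nonempty ι]
    (v : Finset ι → ℝ) (B γ : ℝ) (b : ι → ℝ) : Finset ι :=
  if h : ∃ k, (1 ≤ k ∧ k ≤ Fintype.card ι) ∧
      b (agent v b k) * v (greedySet v b k) >
        γ * B * marg v (greedySet v b (k - 1)) (agent v b k)
  then greedySet v b (Nat.find h - 1)
  else Finset.univ

/-- The exponential-time greedy oracle mechanism `Greedy-EOM(α, b)`: it outputs `S_{k-1}` where
`k` is the least index with `v(S_k) > α · opt_b(A, B)`, and all of `A` if no such `k` exists. -/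
noncomputable def greedyEOM {ι : Type*} [Fintype ι] [LinearOrder ι] [Nonempty ι]
    (v : Finset ι → ℝ) (B α : ℝ) (b : ι → ℝ) : Finset ι :=
  if h : ∃ k, (1 ≤ k ∧ k ≤ Fintype.card ι) ∧
      v (greedySet v b k) > α * optVal v b B Finset.univ
  then greedySet v b (Nat.find h - 1)
  else Finset.univ

/-- The greedy oracle mechanism `Greedy-OM(α, b)` with oracle `O`: it outputs
`{ a_t : 1 ≤ t ≤ n, v(S_t) ≤ α · O(b, A \ {a_t}) }`. -/
noncomputable def greedyOM {ι : Type*} [Fintype ι] [LinearOrder ι] [Nonempty ι]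
    (v : Finset ι → ℝ) (O : (ι → ℝ) → Finset ι → ℝ) (α : ℝ) (b : ι → ℝ) : Finset ι :=
  ((Finset.Icc 1 (Fintype.card ι)).filter
      (fun t => v (greedySet v b t) ≤ α * O b (Finset.univ.erase (agent v b t)))).image
    (fun t => agent v b t)

/-- An allocation rule `f`, mapping bid vectors with positive entries to subsets of the agents,
is monotone if a winner remains a winner after lowering his bid. -/
def MonotoneAlloc {ι : Type*} [DecidableEq ι] (f : (ι → ℝ) → Finset ι) : Prop :=
  ∀ b : ι → ℝ, (∀ j, 0 < b j) → ∀ i ∈ f b, ∀ β : ℝ, 0 < β → β ≤ b i →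
    i ∈ f (Function.update b i β)

theorem card_greedySet_le {ι : Type*} [Fintype ι] [LinearOrder ι] [Nonempty ι]
    (v : Finset ι → ℝ) (b : ι → ℝ) (t : ℕ) : (greedySet v b t).card ≤ t := by
  induction t with
  | zero => simp [greedySet]
  | succ t ih =>
    rw [greedySet]
    exact (Finset.card_insert_le _ _).trans (by omega)

theorem pick_spec {ι : Type*} [Fintype ι] [LinearOrder ι] [Nonempty ι]
    (v : Finset ι → ℝ) (b : ι → ℝ) (S : Finset ι) (h : Sᶜ.Nonempty) :
    ∀ j ∈ Sᶜ, marg v S j / b j ≤ marg v S (pick v b S) / b (pick v b S) := by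
  have h2 : pick v b S ∈
      (Sᶜ.filter fun j => ∀ j' ∈ Sᶜ, marg v S j' / b j' ≤ marg v S j / b j) := by
    unfold pick
    rw [dif_pos h]
    exact Finset.min'_mem _ _
  exact (Finset.mem_filter.mp h2).2

theorem union_le_marg {ι : Type*} [DecidableEq ι] (v : Finset ι → ℝ)
    (hvmono : ∀ S T : Finset ι, S ⊆ T → v S ≤ v T)
    (hvsub : ∀ S T : Finset ι, v (S ∪ T) + v (S ∩ T) ≤ v S + v T)
    (S T : Finset ι) : v (S ∪ T) ≤ v S + ∑ j ∈ T, marg v S j := by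
  induction T using Finset.induction_on with
  | empty => simp
  | insert a T ha ih =>
    rw [Finset.sum_insert ha]
    have h1 := hvsub (S ∪ T) (insert a S)
    have h2 : S ∪ T ∪ insert a S = S ∪ insert a T := by
      ext x; simp only [Finset.mem_union, Finset.mem_insert]; tauto
    have h3 : v S ≤ v ((S ∪ T) ∩ insert a S) := hvmono _ _ (by
      intro x hx; simp [hx])
    rw [h2] at h1
    unfold marg at *
    linarith

/-- the key approximation inequality for `Greedy-TM(γ)` (Lemma 3.2). -/
theorem greedyTM_approx {ι : Type*} [Fintype ι] [LinearOrder ι] [Nonempty ι]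
    (v : Finset ι → ℝ) (hv0 : v (∅ : Finset ι) = 0)
    (hvmono : ∀ S T : Finset ι, S ⊆ T → v S ≤ v T)
    (hvsub : ∀ S T : Finset ι, v (S ∪ T) + v (S ∩ T) ≤ v S + v T)
    (B : ℝ) (hB : 0 < B)
    (c : ι → ℝ) (hc : ∀ i, 0 < c i) (hcB : ∀ i, c i ≤ B)
    (γ : ℝ) (hγ0 : 0 < γ) (hγ1 : γ ≤ 1)
    (istar : ι) (histar : ∀ j : ι, v {j} ≤ v {istar})
    (k : ℕ) (hk1 : 1 ≤ k) (hk2 : k ≤ Fintype.card ι)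
    (hkcond : c (agent v c k) * v (greedySet v c k) >
      γ * B * marg v (greedySet v c (k - 1)) (agent v c k)) :
    (1 + 1 / γ) * v (greedySet v c (k - 1)) + (1 / γ) * v {istar} ≥
      optVal v c B Finset.univ := by
  obtain ⟨t, rfl⟩ : ∃ t, k = t + 1 := ⟨k - 1, by omega⟩
  simp only [agent, Nat.add_sub_cancel, greedySet] at *
  have hcard := card_greedySet_le v c t
  set S := greedySet v c t with hS
  have hne : Sᶜ.Nonempty := by
    rw [← Finset.card_pos, Finset.card_compl]
    omega
  have hp := pick_spec v c S hne
  set a := pick v c S with ha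
  have hca := hc a
  have hmnn : ∀ j, 0 ≤ marg v S j := fun j =>
    sub_nonneg.mpr (hvmono _ _ (Finset.subset_insert _ _))
  have hSa : v (insert a S) ≤ v S + v {istar} := by
    have h1 := hvsub S {a}
    have h2 : 0 ≤ v (S ∩ {a}) := by
      rw [← hv0]; exact hvmono _ _ (Finset.empty_subset _)
    have h3 : S ∪ {a} = insert a S := by
      ext x; simp only [Finset.mem_union, Finset.mem_insert, Finset.mem_singleton]; tauto
    rw [h3] at h1
    linarith [histar a]
  have hr : B * (marg v S a / c a) ≤ 1 / γ * v (insert a S) := by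
    rw [← mul_div_assoc, div_le_iff₀ hca, one_div, mul_assoc, inv_mul_eq_div, le_div_iff₀ hγ0]
    linarith
  have hg : 1 / γ * v (insert a S) ≤ 1 / γ * (v S + v {istar}) :=
    mul_le_mul_of_nonneg_left hSa (by positivity)
  unfold optVal
  apply csSup_le
  · exact ⟨v ∅, ∅, by simp [hB.le], rfl⟩
  · rintro _ ⟨T, ⟨-, hT⟩, rfl⟩
    have h1 : v T ≤ v (S ∪ T) := hvmono _ _ Finset.subset_union_right
    have h2 := union_le_marg v hvmono hvsub S T
    have h3 : ∑ j ∈ T, marg v S j ≤ ∑ j ∈ T, c j * (marg v S a / c a) := by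
      apply Finset.sum_le_sum
      intro j _
      by_cases hj : j ∈ S
      · have : marg v S j = 0 := by simp [marg, Finset.insert_eq_of_mem hj]
        rw [this]
        exact mul_nonneg (hc j).le (div_nonneg (hmnn a) hca.le)
      · have := hp j (Finset.mem_compl.mpr hj)
        rw [div_le_iff₀ (hc j)] at this
        linarith
    rw [← Finset.sum_mul] at h3
    have h4 : (∑ j ∈ T, c j) * (marg v S a / c a) ≤ B * (marg v S a / c a) :=
      mul_le_mul_of_nonneg_right hT (div_nonneg (hmnn a) hca.le)
    linarith
end

section
/- Let S = Greedy-EOM(1/2, c), where c is the vector of true costs, and for each winner i ∈ S let p_i = sup{ β > 0 : i ∈ Greedy-EOM(1/2, (β, c_{−i})) } be its threshold payment. Then Σ_{i∈S} p_i ≤ B; that is, the mechanism Greedy-EOM(1/2) with threshold payments is budget feasible. -/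
open Classical

section helpers
variable {ι : Type*} [Fintype ι] [LinearOrder ι] [Nonempty ι]

lemma h_pick_spec (v : Finset ι → ℝ) (b : ι → ℝ) (S : Finset ι) (h : Sᶜ.Nonempty) :
    pick v b S ∉ S ∧ (∀ j ∉ S, marg v S j / b j ≤ marg v S (pick v b S) / b (pick v b S)) ∧
    (∀ j ∉ S, (∀ j' ∉ S, marg v S j' / b j' ≤ marg v S j / b j) → pick v b S ≤ j) := by
  have hp : pick v b S = (Sᶜ.filter fun j => ∀ j' ∈ Sᶜ, marg v S j' / b j' ≤ marg v S j / b j).min'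
      (by
        obtain ⟨j, hj, hmax⟩ := Finset.exists_max_image Sᶜ (fun j => marg v S j / b j) h
        exact ⟨j, Finset.mem_filter.mpr ⟨hj, hmax⟩⟩) := by
    unfold pick
    rw [dif_pos h]
  have hm := Finset.min'_mem (Sᶜ.filter fun j => ∀ j' ∈ Sᶜ, marg v S j' / b j' ≤ marg v S j / b j)
      (by
        obtain ⟨j, hj, hmax⟩ := Finset.exists_max_image Sᶜ (fun j => marg v S j / b j) h
        exact ⟨j, Finset.mem_filter.mpr ⟨hj, hmax⟩⟩)
  rw [← hp, Finset.mem_filter, Finset.mem_compl] at hm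
  refine ⟨hm.1, fun j hj => hm.2 j (Finset.mem_compl.mpr hj), fun j hj hmax => ?_⟩
  rw [hp]
  apply Finset.min'_le
  rw [Finset.mem_filter]
  exact ⟨Finset.mem_compl.mpr hj, fun j' hj' => hmax j' (Finset.mem_compl.mp hj')⟩

lemma h_greedy_mono (v : Finset ι → ℝ) (b : ι → ℝ) : Monotone (greedySet v b) := by
  apply monotone_nat_of_le_succ
  intro n
  exact Finset.subset_insert _ _

lemma h_greedy_card_le (v : Finset ι → ℝ) (b : ι → ℝ) (t : ℕ) : (greedySet v b t).card ≤ t := by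
  induction t with
  | zero => simp [greedySet]
  | succ t ih =>
    have := Finset.card_insert_le (pick v b (greedySet v b t)) (greedySet v b t)
    simp only [greedySet]; omega

lemma h_compl_ne (v : Finset ι → ℝ) (b : ι → ℝ) {t : ℕ} (ht : t < Fintype.card ι) :
    (greedySet v b t)ᶜ.Nonempty := by
  rw [← Finset.card_pos, Finset.card_compl]
  have := h_greedy_card_le v b t
  omega

lemma h_greedy_card (v : Finset ι → ℝ) (b : ι → ℝ) (t : ℕ) (ht : t ≤ Fintype.card ι) :
    (greedySet v b t).card = t := by
  induction t with
  | zero => simp [greedySet]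
  | succ t ih =>
    simp only [greedySet]
    rw [Finset.card_insert_of_notMem (h_pick_spec v b _ (h_compl_ne v b (by omega))).1, ih (by omega)]

lemma h_greedy_univ (v : Finset ι → ℝ) (b : ι → ℝ) :
    greedySet v b (Fintype.card ι) = Finset.univ :=
  Finset.eq_univ_of_card _ (h_greedy_card v b _ le_rfl)

lemma h_mem_greedy (v : Finset ι → ℝ) (b : ι → ℝ) (i : ι) (m : ℕ)
    (h : i ∈ greedySet v b m) : ∃ t < m, i = pick v b (greedySet v b t) := by
  induction m with
  | zero => simp [greedySet] at h
  | succ m ih =>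
    simp only [greedySet, Finset.mem_insert] at h
    rcases h with h | h
    · exact ⟨m, by omega, h⟩
    · obtain ⟨t, ht, e⟩ := ih h
      exact ⟨t, by omega, e⟩

lemma h_eom (v : Finset ι → ℝ) (hv0 : v (∅ : Finset ι) = 0) (B : ℝ) (b : ι → ℝ)
    (hopt : 0 ≤ optVal v b B Finset.univ) :
    ∃ m ≤ Fintype.card ι, greedyEOM v B (1 / 2) b = greedySet v b m ∧
      ∀ t ≤ m, v (greedySet v b t) ≤ 1 / 2 * optVal v b B Finset.univ := by
  unfold greedyEOM
  split_ifs with h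
  · refine ⟨Nat.find h - 1, ?_, rfl, ?_⟩
    · have := (Nat.find_spec h).1; omega
    · intro t ht
      have hs := (Nat.find_spec h).1
      have := Nat.find_min h (m := t) (by omega)
      by_cases h0 : t = 0
      · subst h0; simp only [greedySet, hv0]; positivity
      · by_contra hc
        exact this ⟨⟨by omega, by omega⟩, not_le.mp hc⟩
  · refine ⟨Fintype.card ι, le_rfl, (h_greedy_univ v b).symm, ?_⟩
    intro t ht
    by_cases h0 : t = 0
    · subst h0; simp only [greedySet, hv0]; positivity
    · by_contra hc
      exact h ⟨t, ⟨by omega, by omega⟩, not_le.mp hc⟩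

lemma h_bdd (v : Finset ι → ℝ) (b : ι → ℝ) (B : ℝ) :
    BddAbove (v '' {S : Finset ι | S ⊆ Finset.univ ∧ ∑ i ∈ S, b i ≤ B}) :=
  (Set.toFinite _).bddAbove

lemma h_opt_le (v : Finset ι → ℝ) (b : ι → ℝ) (B : ℝ) (S : Finset ι) (h : ∑ i ∈ S, b i ≤ B) :
    v S ≤ optVal v b B Finset.univ :=
  le_csSup (h_bdd v b B) ⟨S, ⟨Finset.subset_univ _, h⟩, rfl⟩

lemma h_opt_ex (v : Finset ι → ℝ) (b : ι → ℝ) (B : ℝ) (hB : 0 < B) :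
    ∃ S : Finset ι, ∑ i ∈ S, b i ≤ B ∧ v S = optVal v b B Finset.univ := by
  have hne : (v '' {S : Finset ι | S ⊆ Finset.univ ∧ ∑ i ∈ S, b i ≤ B}).Nonempty :=
    ⟨v ∅, ∅, ⟨Finset.subset_univ _, by simpa using hB.le⟩, rfl⟩
  obtain ⟨S, hS, e⟩ := hne.csSup_mem (Set.toFinite _)
  exact ⟨S, hS.2, e⟩

lemma h_marg_anti (v : Finset ι → ℝ)
    (hvmono : ∀ S T : Finset ι, S ⊆ T → v S ≤ v T)
    (hvsub : ∀ S T : Finset ι, v (S ∪ T) + v (S ∩ T) ≤ v S + v T)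
    {S T : Finset ι} (h : S ⊆ T) (i : ι) : marg v T i ≤ marg v S i := by
  unfold marg
  have h1 := hvsub (insert i S) T
  have e : insert i S ∪ T = insert i T := by
    rw [Finset.insert_union, Finset.union_eq_right.mpr h]
  have h2 := hvmono S (insert i S ∩ T) (Finset.subset_inter (Finset.subset_insert _ _) h)
  rw [e] at h1
  linarith

lemma h_marg_nonneg (v : Finset ι → ℝ)
    (hvmono : ∀ S T : Finset ι, S ⊆ T → v S ≤ v T) (S : Finset ι) (i : ι) : 0 ≤ marg v S i :=
  sub_nonneg.mpr (hvmono _ _ (Finset.subset_insert _ _))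

lemma h_union (v : Finset ι → ℝ)
    (hvmono : ∀ S T : Finset ι, S ⊆ T → v S ≤ v T)
    (hvsub : ∀ S T : Finset ι, v (S ∪ T) + v (S ∩ T) ≤ v S + v T)
    (T O : Finset ι) : v (O ∪ T) ≤ v T + ∑ j ∈ O, marg v T j := by
  induction O using Finset.induction_on with
  | empty => simp
  | insert a s ha ih =>
    rw [Finset.sum_insert ha, Finset.insert_union]
    have := h_marg_anti v hvmono hvsub (Finset.subset_union_right (s₁ := s) (s₂ := T)) a
    unfold marg at this ih ⊢
    linarith

lemma h_pick_upd (v : Finset ι → ℝ)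
    (hvmono : ∀ S T : Finset ι, S ⊆ T → v S ≤ v T)
    (c : ι → ℝ) (hc : ∀ i, 0 < c i) (i : ι) (β : ℝ) (hβ : c i ≤ β) (S : Finset ι)
    (hS : Sᶜ.Nonempty) (hi : pick v c S ≠ i) :
    pick v (Function.update c i β) S = pick v c S := by
  obtain ⟨p1, p2, p3⟩ := h_pick_spec v c S hS
  obtain ⟨q1, q2, q3⟩ := h_pick_spec v (Function.update c i β) S hS
  have hle : ∀ j, marg v S j / (Function.update c i β) j ≤ marg v S j / c j := by
    intro j
    by_cases h : j = i
    · subst h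
      rw [Function.update_self]
      exact div_le_div_of_nonneg_left (h_marg_nonneg v hvmono S j) (hc j) hβ
    · rw [Function.update_of_ne h]
  have e : Function.update c i β (pick v c S) = c (pick v c S) := Function.update_of_ne hi _ _
  apply le_antisymm
  · apply q3 _ p1
    intro j hj
    rw [e]
    exact (hle j).trans (p2 j hj)
  · apply p3 _ q1
    intro j hj
    have := q2 _ p1
    rw [e] at this
    exact (p2 j hj).trans (this.trans (hle _))

lemma h_prefix (v : Finset ι → ℝ)
    (hvmono : ∀ S T : Finset ι, S ⊆ T → v S ≤ v T)
    (c : ι → ℝ) (hc : ∀ i, 0 < c i) (i : ι) (β : ℝ) (hβ : c i ≤ β) (t : ℕ)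
    (ht : t ≤ Fintype.card ι) (hi : i ∉ greedySet v c t) :
    greedySet v (Function.update c i β) t = greedySet v c t := by
  induction t with
  | zero => rfl
  | succ t ih =>
    simp only [greedySet, Finset.mem_insert, not_or] at hi ⊢
    rw [ih (by omega) hi.2, h_pick_upd v hvmono c hc i β hβ _ (h_compl_ne v c (by omega))
      (Ne.symm hi.1)]

lemma h_key (v : Finset ι → ℝ) (hv0 : v (∅ : Finset ι) = 0)
    (hvmono : ∀ S T : Finset ι, S ⊆ T → v S ≤ v T)
    (hvsub : ∀ S T : Finset ι, v (S ∪ T) + v (S ∩ T) ≤ v S + v T)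
    (B : ℝ) (hB : 0 < B) (c : ι → ℝ) (hc : ∀ i, 0 < c i)
    (i : ι) (β : ℝ) (hβ : c i ≤ β) (t : ℕ) (ht : t < Fintype.card ι)
    (hit : i = pick v c (greedySet v c t))
    (hw : i ∈ greedyEOM v B (1 / 2) (Function.update c i β)) :
    β * (1 / 2 * optVal v c B Finset.univ) ≤ B * marg v (greedySet v c t) i := by
  have hβ0 : 0 < β := (hc i).trans_le hβ
  set b := Function.update c i β with hb
  have hbi : b i = β := Function.update_self _ _ _
  have hbj : ∀ j, j ≠ i → b j = c j := fun j hj => Function.update_of_ne hj _ _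
  have hcb : ∀ j, c j ≤ b j := by
    intro j
    by_cases h : j = i
    · subst h; rw [hbi]; exact hβ
    · rw [hbj j h]
  have hopt0 : 0 ≤ optVal v b B Finset.univ := by
    rw [← hv0]; exact h_opt_le v b B ∅ (by simpa using hB.le)
  have hoptle : optVal v b B Finset.univ ≤ optVal v c B Finset.univ := by
    obtain ⟨O, hO, e⟩ := h_opt_ex v b B hB
    rw [← e]
    exact h_opt_le v c B O ((Finset.sum_le_sum fun j _ => hcb j).trans hO)
  obtain ⟨m, hm, hf, hval⟩ := h_eom v hv0 B b hopt0
  rw [hf] at hw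
  obtain ⟨s, hs, hsi⟩ := h_mem_greedy v b i m hw
  have hv := hval (s + 1) (by omega)
  have hni : i ∉ greedySet v c t := by
    rw [hit]; exact (h_pick_spec v c _ (h_compl_ne v c ht)).1
  have hpre := h_prefix v hvmono c hc i β hβ t ht.le hni
  rw [← hb] at hpre
  have hts : t ≤ s := by
    by_contra h
    have h1 : i ∈ greedySet v b (s + 1) := by
      simp only [greedySet]; rw [← hsi]; exact Finset.mem_insert_self _ _
    have := h_greedy_mono v b (show s + 1 ≤ t by omega) h1
    rw [hpre] at this
    exact hni this
  have hsub : greedySet v c t ⊆ greedySet v b s := by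
    rw [← hpre]; exact h_greedy_mono v b hts
  obtain ⟨_, q2, _⟩ := h_pick_spec v b (greedySet v b s) (h_compl_ne v b (by omega))
  simp only [greedySet] at hv
  rw [← hsi] at hv q2
  set T := greedySet v b s with hT
  have hanti := h_marg_anti v hvmono hvsub hsub i
  have hm0 := h_marg_nonneg v hvmono T i
  obtain ⟨O, hO, e⟩ := h_opt_ex v c B hB
  set μ := marg v T i with hμ
  rw [hbi] at q2
  have hr : 0 ≤ μ / β := by positivity
  have hvi : v T + μ = v (insert i T) := by rw [hμ]; unfold marg; ring
  have hj : ∀ j, j ≠ i → marg v T j ≤ c j * (μ / β) := by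
    intro j hji
    by_cases hjT : j ∈ T
    · have : marg v T j = 0 := by unfold marg; rw [Finset.insert_eq_of_mem hjT, sub_self]
      rw [this]
      exact mul_nonneg (hc j).le hr
    · have := q2 j hjT
      rw [hbj j hji, div_le_iff₀ (hc j)] at this
      linarith
  have hsum : ∑ j ∈ O.erase i, marg v T j ≤ B * (μ / β) := by
    calc ∑ j ∈ O.erase i, marg v T j ≤ ∑ j ∈ O.erase i, c j * (μ / β) :=
          Finset.sum_le_sum fun j hj' => hj j (Finset.ne_of_mem_erase hj')
      _ = (∑ j ∈ O.erase i, c j) * (μ / β) := by rw [Finset.sum_mul]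
      _ ≤ B * (μ / β) := by
          apply mul_le_mul_of_nonneg_right _ hr
          exact (Finset.sum_le_sum_of_subset_of_nonneg (Finset.erase_subset _ _)
            (fun j _ _ => (hc j).le)).trans hO
  have hall : ∑ j ∈ O, marg v T j ≤ μ + ∑ j ∈ O.erase i, marg v T j := by
    by_cases hiO : i ∈ O
    · rw [← Finset.add_sum_erase O _ hiO]
    · rw [Finset.erase_eq_of_notMem hiO]; linarith
  have h1 := h_union v hvmono hvsub T O
  have h2 := hvmono O (O ∪ T) Finset.subset_union_left
  have h3 : 1 / 2 * optVal v c B Finset.univ ≤ B * (μ / β) := by linarith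
  calc β * (1 / 2 * optVal v c B Finset.univ) ≤ β * (B * (μ / β)) :=
        mul_le_mul_of_nonneg_left h3 hβ0.le
    _ = B * μ := by field_simp
    _ ≤ _ := mul_le_mul_of_nonneg_left hanti hB.le

lemma h_sum (v : Finset ι → ℝ) (hv0 : v (∅ : Finset ι) = 0) (c : ι → ℝ) (p : ι → ℝ) (K : ℝ) (m : ℕ)
    (hm : m ≤ Fintype.card ι)
    (h : ∀ t < m, p (pick v c (greedySet v c t)) ≤
      K * marg v (greedySet v c t) (pick v c (greedySet v c t))) :
    ∑ i ∈ greedySet v c m, p i ≤ K * v (greedySet v c m) := by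
  induction m with
  | zero => simp [greedySet, hv0]
  | succ m ih =>
    have h1 := ih (by omega) (fun t ht => h t (by omega))
    have h2 := h m (by omega)
    simp only [greedySet]
    rw [Finset.sum_insert (h_pick_spec v c _ (h_compl_ne v c (by omega))).1]
    unfold marg at h2
    linarith
end helpers

/-- `Greedy-EOM(1/2)` with threshold payments is budget feasible
(Lemma 4.3). -/
theorem greedyEOM_budget_feasible {ι : Type*} [Fintype ι] [LinearOrder ι] [Nonempty ι]
    (v : Finset ι → ℝ) (hv0 : v (∅ : Finset ι) = 0)
    (hvmono : ∀ S T : Finset ι, S ⊆ T → v S ≤ v T)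
    (hvsub : ∀ S T : Finset ι, v (S ∪ T) + v (S ∩ T) ≤ v S + v T)
    (B : ℝ) (hB : 0 < B)
    (c : ι → ℝ) (hc : ∀ i, 0 < c i) (hcB : ∀ i, c i ≤ B) :
    ∑ i ∈ greedyEOM v B (1 / 2) c,
      sSup {β : ℝ | 0 < β ∧ i ∈ greedyEOM v B (1 / 2) (Function.update c i β)} ≤ B := by
  have hvn : ∀ S, 0 ≤ v S := fun S => by rw [← hv0]; exact hvmono _ _ (Finset.empty_subset _)
  have hoptn : ∀ b, 0 ≤ optVal v b B Finset.univ := fun b => by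
    rw [← hv0]; exact h_opt_le v b B ∅ (by simpa using hB.le)
  rcases (hvn Finset.univ).eq_or_lt with h0 | hpos
  · have hz : ∀ S, v S = 0 := fun S =>
      le_antisymm (h0 ▸ hvmono S _ (Finset.subset_univ _)) (hvn S)
    have hf : ∀ b, greedyEOM v B (1 / 2) b = Finset.univ := by
      intro b
      unfold greedyEOM
      rw [dif_neg]
      rintro ⟨k, _, hk⟩
      rw [hz] at hk
      have := hoptn b
      linarith
    refine le_trans (Finset.sum_nonpos fun i _ => ?_) hB.le
    simp only [hf, Finset.mem_univ, and_true]
    apply le_of_eq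
    apply Real.sSup_of_not_bddAbove
    rintro ⟨M, hM⟩
    have := hM (show |M| + 1 ∈ {β : ℝ | 0 < β} by
      have := abs_nonneg M
      show 0 < |M| + 1
      linarith)
    have := le_abs_self M
    linarith
  · have hopt : 0 < optVal v c B Finset.univ := by
      by_contra hn
      have hs : ∀ j, marg v ∅ j ≤ 0 := by
        intro j
        have := h_opt_le v c B {j} (by simpa using hcB j)
        unfold marg
        rw [hv0, insert_empty_eq]
        linarith
      have := h_union v hvmono hvsub ∅ Finset.univ
      have h2 : ∑ j, marg v ∅ j ≤ 0 := Finset.sum_nonpos fun j _ => hs j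
      rw [Finset.union_empty, hv0] at this
      linarith
    obtain ⟨m, hm, hf, hval⟩ := h_eom v hv0 B c (hoptn c)
    have hvS := hval m le_rfl
    have key : ∀ t < m, ∀ β : ℝ, 0 < β → pick v c (greedySet v c t) ∈
        greedyEOM v B (1 / 2) (Function.update c (pick v c (greedySet v c t)) β) →
        β * (1 / 2 * optVal v c B Finset.univ) ≤
          B * marg v (greedySet v c t) (pick v c (greedySet v c t)) := by
      intro t ht β hβ hw
      rcases le_total (c (pick v c (greedySet v c t))) β with h | h
      · exact h_key v hv0 hvmono hvsub B hB c hc _ β h t (by omega) rfl hw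
      · refine le_trans (mul_le_mul_of_nonneg_right h (by positivity)) ?_
        refine h_key v hv0 hvmono hvsub B hB c hc _ _ le_rfl t (by omega) rfl ?_
        rw [Function.update_eq_self, hf]
        have : pick v c (greedySet v c t) ∈ greedySet v c (t + 1) := by
          simp only [greedySet]; exact Finset.mem_insert_self _ _
        exact h_greedy_mono v c (show t + 1 ≤ m by omega) this
    rw [hf]
    set K := B / (1 / 2 * optVal v c B Finset.univ) with hK
    have hK0 : 0 ≤ K := by positivity
    refine (h_sum v hv0 c _ K m hm ?_).trans ?_
    · intro t ht
      refine Real.sSup_le ?_ (mul_nonneg hK0 (h_marg_nonneg v hvmono _ _))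
      rintro β ⟨hβ, hw⟩
      have := key t ht β hβ hw
      rw [hK, div_mul_eq_mul_div, le_div_iff₀ (by positivity)]
      exact this
    · calc K * v (greedySet v c m) ≤ K * (1 / 2 * optVal v c B Finset.univ) :=
            mul_le_mul_of_nonneg_left hvS hK0
        _ = B := by rw [hK]; field_simp
end

section
/- Suppose the oracle O has the property that O(b, A') depends only on the restriction of the bid vector b to A' (in particular, O(b, A ∖ {i}) does not depend on i's bid). Then for every fixed α ∈ (0,1], the allocation rule b ↦ Greedy-OM(α, b) is monotone: for every bid vector b with positive entries, every agent i ∈ Greedy-OM(α, b), and every 0 < β ≤ b_i, one has i ∈ Greedy-OM(α, (β, b_{−i})). -/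
open Classical

theorem pick_spec_aux {ι : Type*} [Fintype ι] [LinearOrder ι] [Nonempty ι]
    (v : Finset ι → ℝ) (b : ι → ℝ) (S : Finset ι) (h : Sᶜ.Nonempty) :
    pick v b S ∈ Sᶜ ∧ (∀ j ∈ Sᶜ, marg v S j / b j ≤ marg v S (pick v b S) / b (pick v b S)) ∧
    (∀ k ∈ Sᶜ, (∀ j ∈ Sᶜ, marg v S j / b j ≤ marg v S k / b k) → pick v b S ≤ k) := by
  unfold pick
  rw [dif_pos h]
  generalize_proofs hne
  have h1 := Finset.min'_mem _ hne
  have h2 := Finset.mem_filter.mp h1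
  refine ⟨h2.1, h2.2, fun k hk hmax => ?_⟩
  exact Finset.min'_le _ _ (Finset.mem_filter.mpr ⟨hk, hmax⟩)

theorem pick_update_aux {ι : Type*} [Fintype ι] [LinearOrder ι] [Nonempty ι]
    (v : Finset ι → ℝ) (hvmono : ∀ S T : Finset ι, S ⊆ T → v S ≤ v T)
    (b : ι → ℝ) (i : ι) (β : ℝ) (hβ : 0 < β) (hle : β ≤ b i)
    (S : Finset ι) (hne : pick v (Function.update b i β) S ≠ i) :
    pick v b S = pick v (Function.update b i β) S := by
  by_cases h : Sᶜ.Nonempty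
  · obtain ⟨a1, a2, a3⟩ := pick_spec_aux v b S h
    obtain ⟨c1, c2, c3⟩ := pick_spec_aux v (Function.update b i β) S h
    set k := pick v (Function.update b i β) S
    set p := pick v b S
    have hm : ∀ j, marg v S j / b j ≤ marg v S j / (Function.update b i β) j := by
      intro j
      by_cases hj : j = i
      · subst hj
        rw [Function.update_self]
        have : 0 ≤ marg v S j := sub_nonneg.mpr (hvmono _ _ (Finset.subset_insert _ _))
        exact div_le_div_of_nonneg_left this hβ hle
      · rw [Function.update_of_ne hj]
    have hk : (Function.update b i β) k = b k := Function.update_of_ne hne _ _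
    rw [hk] at c2
    have e1 : p ≤ k := a3 k c1 fun j hj => (hm j).trans (c2 j hj)
    have e2 : k ≤ p := c3 p a1 fun j hj =>
      (c2 j hj).trans ((a2 k c1).trans (hm p))
    exact le_antisymm e1 e2
  · unfold pick
    rw [dif_neg h, dif_neg h]

theorem greedySet_update_aux {ι : Type*} [Fintype ι] [LinearOrder ι] [Nonempty ι]
    (v : Finset ι → ℝ) (hvmono : ∀ S T : Finset ι, S ⊆ T → v S ≤ v T)
    (b : ι → ℝ) (i : ι) (β : ℝ) (hβ : 0 < β) (hle : β ≤ b i) (t : ℕ)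
    (h : ∀ s < t, pick v (Function.update b i β) (greedySet v (Function.update b i β) s) ≠ i) :
    greedySet v b t = greedySet v (Function.update b i β) t := by
  induction t with
  | zero => rfl
  | succ t ih =>
    have ih' := ih fun s hs => h s (by omega)
    have := h t (by omega)
    rw [greedySet, greedySet, ih', pick_update_aux v hvmono b i β hβ hle _ this]

theorem greedySet_mono_aux {ι : Type*} [Fintype ι] [LinearOrder ι] [Nonempty ι]
    (v : Finset ι → ℝ) (b : ι → ℝ) : Monotone (greedySet v b) :=
  monotone_nat_of_le_succ fun _ => Finset.subset_insert _ _

/-- if the oracle's answer on `A'` depends only on the restriction of the bid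
vector to `A'`, then for every fixed `α ∈ (0,1]` the allocation rule `b ↦ Greedy-OM(α, b)`
is monotone (part of Lemma 4.6). -/
theorem greedyOM_monotone {ι : Type*} [Fintype ι] [LinearOrder ι] [Nonempty ι]
    (v : Finset ι → ℝ) (hv0 : v (∅ : Finset ι) = 0)
    (hvmono : ∀ S T : Finset ι, S ⊆ T → v S ≤ v T)
    (hvsub : ∀ S T : Finset ι, v (S ∪ T) + v (S ∩ T) ≤ v S + v T)
    (O : (ι → ℝ) → Finset ι → ℝ)
    (hO : ∀ (b b' : ι → ℝ) (A' : Finset ι), (∀ j ∈ A', b j = b' j) → O b A' = O b' A')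
    (α : ℝ) (hα0 : 0 < α) (hα1 : α ≤ 1) :
    MonotoneAlloc (fun b => greedyOM v O α b) := by
  intro b hb i hi β hβ hle
  simp only [greedyOM, Finset.mem_image, Finset.mem_filter, Finset.mem_Icc] at hi ⊢
  obtain ⟨t, ⟨⟨ht1, htn⟩, hv⟩, hag⟩ := hi
  rw [hag] at hv
  obtain ⟨u, rfl⟩ : ∃ u, t = u + 1 := ⟨t - 1, by omega⟩
  have hag' : pick v b (greedySet v b u) = i := hag
  set b' := Function.update b i β with hb'
  have hex : ∃ s, s ≤ u ∧ pick v b' (greedySet v b' s) = i := by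
    by_contra! hcon
    have e := greedySet_update_aux v hvmono b i β hβ hle u fun s hs => hcon s hs.le
    have hu := hcon u le_rfl
    have e2 := pick_update_aux v hvmono b i β hβ hle _ hu
    rw [← hb'] at e e2
    rw [← e2, ← e] at hu
    exact hu hag'
  have hs := Nat.find_spec hex
  have hmin : ∀ r < Nat.find hex, pick v b' (greedySet v b' r) ≠ i := fun r hr hri =>
    Nat.find_min hex hr ⟨hr.le.trans hs.1, hri⟩
  generalize Nat.find hex = s at hs hmin
  obtain ⟨hsu, hsi⟩ := hs
  have hag2 : agent v b' (s + 1) = i := hsi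
  refine ⟨s + 1, ⟨⟨by omega, by omega⟩, ?_⟩, hag2⟩
  rw [hag2]
  have e := greedySet_update_aux v hvmono b i β hβ hle s hmin
  have hOeq : O b' (Finset.univ.erase i) = O b (Finset.univ.erase i) :=
    hO _ _ _ fun j hj => Function.update_of_ne (Finset.ne_of_mem_erase hj) _ _
  rw [hOeq]
  refine le_trans (hvmono _ _ ?_) hv
  rw [greedySet, greedySet, hsi, hag', hb', ← e]
  exact Finset.insert_subset_insert _ (greedySet_mono_aux v b hsu)
end

section
/- Let r ≥ 1 and α ∈ (0,1], and suppose the oracle O satisfies O(c, A') ≤ opt(A', B) ≤ r · O(c, A') for every A' ⊆ A. Let S = Greedy-OM(α, c) with respect to the true costs c. Then (1 + 2r/α) · [ (r/(α+2r)) · v(S) + ((α+r)/(α+2r)) · v({i*}) ] ≥ opt(A, B). (The bracketed quantity is the expected value obtained by Random-OM(α), which outputs Greedy-OM(α, c) with probability r/(α+2r) and outputs {i*} with probability (α+r)/(α+2r); hence Random-OM(α) is a (1 + 2r/α)-approximation, and in particular Random-OM(1/2) is a (1 + 4r)-approximation, of the optimum.) -/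
open Classical

theorem aux_optVal_bdd {ι : Type*} [Fintype ι] (v : Finset ι → ℝ) (s : Set (Finset ι)) :
    BddAbove (v '' s) :=
  ((Set.toFinite s).image v).bddAbove

theorem aux_pick_notMem {ι : Type*} [Fintype ι] [LinearOrder ι] [Nonempty ι]
    (v : Finset ι → ℝ) (b : ι → ℝ) (S : Finset ι) (h : Sᶜ.Nonempty) : pick v b S ∉ S := by
  unfold pick
  rw [dif_pos h]
  have := Finset.min'_mem (Sᶜ.filter fun j => ∀ j' ∈ Sᶜ, marg v S j' / b j' ≤ marg v S j / b j)
      (by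
        obtain ⟨j, hj, hmax⟩ := Finset.exists_max_image Sᶜ (fun j => marg v S j / b j) h
        exact ⟨j, Finset.mem_filter.mpr ⟨hj, hmax⟩⟩)
  exact Finset.mem_compl.mp (Finset.mem_filter.mp this).1

theorem aux_card {ι : Type*} [Fintype ι] [LinearOrder ι] [Nonempty ι]
    (v : Finset ι → ℝ) (b : ι → ℝ) (t : ℕ) (ht : t ≤ Fintype.card ι) :
    t ≤ (greedySet v b t).card := by
  induction t with
  | zero => simp
  | succ t ih =>
    have ih := ih (by omega)
    simp only [greedySet]
    by_cases h : (greedySet v b t)ᶜ.Nonempty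
    · rw [Finset.card_insert_of_notMem (aux_pick_notMem v b _ h)]; omega
    · rw [Finset.not_nonempty_iff_eq_empty, Finset.compl_eq_empty_iff] at h
      refine le_trans ?_ (Finset.card_le_card (Finset.subset_insert _ _))
      rw [h, Finset.card_univ]; exact ht

theorem aux_sub {ι : Type*} [Fintype ι] [LinearOrder ι] [Nonempty ι]
    (v : Finset ι → ℝ) (b : ι → ℝ) (W : Finset ι) (t : ℕ)
    (h : ∀ s, 1 ≤ s → s ≤ t → agent v b s ∈ W) : greedySet v b t ⊆ W := by
  induction t with
  | zero => simp [greedySet]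
  | succ t ih =>
    simp only [greedySet]
    refine Finset.insert_subset ?_ (ih fun s h1 h2 => h s h1 (by omega))
    simpa [agent] using h (t + 1) (by omega) le_rfl

theorem aux_mem {ι : Type*} [Fintype ι] [LinearOrder ι] [Nonempty ι]
    (v : Finset ι → ℝ) (O : (ι → ℝ) → Finset ι → ℝ) (α : ℝ) (b : ι → ℝ) (t : ℕ)
    (h1 : 1 ≤ t) (h2 : t ≤ Fintype.card ι)
    (h : v (greedySet v b t) ≤ α * O b (Finset.univ.erase (agent v b t))) :
    agent v b t ∈ greedyOM v O α b := by
  unfold greedyOM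
  exact Finset.mem_image_of_mem _ (Finset.mem_filter.mpr ⟨Finset.mem_Icc.mpr ⟨h1, h2⟩, h⟩)

theorem aux_insert {ι : Type*} [LinearOrder ι]
    (v : Finset ι → ℝ) (hv0 : v (∅ : Finset ι) = 0)
    (hvmono : ∀ S T : Finset ι, S ⊆ T → v S ≤ v T)
    (hvsub : ∀ S T : Finset ι, v (S ∪ T) + v (S ∩ T) ≤ v S + v T) (a : ι) (S : Finset ι) :
    v (insert a S) ≤ v S + v {a} := by
  have h1 := hvsub S {a}
  have h2 := hvmono ∅ (S ∩ {a}) (Finset.empty_subset _)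
  have h3 := hvmono (insert a S) (S ∪ {a}) (by intro x; simp)
  linarith

theorem aux_opt {ι : Type*} [Fintype ι] [LinearOrder ι]
    (v : Finset ι → ℝ) (hv0 : v (∅ : Finset ι) = 0)
    (hvmono : ∀ S T : Finset ι, S ⊆ T → v S ≤ v T)
    (hvsub : ∀ S T : Finset ι, v (S ∪ T) + v (S ∩ T) ≤ v S + v T)
    (B : ℝ) (hB : 0 < B) (c : ι → ℝ) (hc : ∀ i, 0 < c i) (a : ι) :
    optVal v c B Finset.univ ≤ optVal v c B (Finset.univ.erase a) + v {a} := by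
  refine csSup_le ⟨v ∅, ∅, ⟨by simp, by simpa using hB.le⟩, rfl⟩ ?_
  rintro _ ⟨S, ⟨-, hS⟩, rfl⟩
  have h1 : v (S.erase a) ≤ optVal v c B (Finset.univ.erase a) :=
    le_csSup (aux_optVal_bdd v _) ⟨S.erase a, ⟨Finset.erase_subset_erase _ (Finset.subset_univ _),
      le_trans (Finset.sum_le_sum_of_subset_of_nonneg (Finset.erase_subset _ _)
        fun i _ _ => (hc i).le) hS⟩, rfl⟩
  have h2 := aux_insert v hv0 hvmono hvsub a (S.erase a)
  have h3 := hvmono S (insert a (S.erase a)) (Finset.insert_erase_subset a S)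
  linarith

/-- `Random-OM(α)` with an `r`-approximation oracle is a
`(1 + 2r/α)`-approximation of the optimum (Theorem 4.9). -/
theorem randomOM_approx {ι : Type*} [Fintype ι] [LinearOrder ι] [Nonempty ι]
    (v : Finset ι → ℝ) (hv0 : v (∅ : Finset ι) = 0)
    (hvmono : ∀ S T : Finset ι, S ⊆ T → v S ≤ v T)
    (hvsub : ∀ S T : Finset ι, v (S ∪ T) + v (S ∩ T) ≤ v S + v T)
    (B : ℝ) (hB : 0 < B)
    (c : ι → ℝ) (hc : ∀ i, 0 < c i) (hcB : ∀ i, c i ≤ B)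
    (r : ℝ) (hr : 1 ≤ r) (α : ℝ) (hα0 : 0 < α) (hα1 : α ≤ 1)
    (O : (ι → ℝ) → Finset ι → ℝ)
    (hO : ∀ A' : Finset ι, O c A' ≤ optVal v c B A' ∧ optVal v c B A' ≤ r * O c A')
    (istar : ι) (histar : ∀ j : ι, v {j} ≤ v {istar}) :
    (1 + 2 * r / α) * (r / (α + 2 * r) * v (greedyOM v O α c) +
        (α + r) / (α + 2 * r) * v {istar}) ≥
      optVal v c B Finset.univ := by
  have hpos : 0 < α + 2 * r := by linarith
  have hi0 : 0 ≤ v {istar} := by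
    rw [← hv0]; exact hvmono _ _ (Finset.empty_subset _)
  set W := greedyOM v O α c with hW
  have hW0 : 0 ≤ v W := by
    rw [← hv0]; exact hvmono _ _ (Finset.empty_subset _)
  have key : α * optVal v c B Finset.univ ≤ r * v W + (α + r) * v {istar} := by
    by_cases h : ∃ t, (1 ≤ t ∧ t ≤ Fintype.card ι) ∧
        ¬ v (greedySet v c t) ≤ α * O c (Finset.univ.erase (agent v c t))
    · obtain ⟨⟨h1, h2⟩, h3⟩ := Nat.find_spec h
      have hmin := fun m (hm : m < Nat.find h) => Nat.find_min h hm
      generalize Nat.find h = k at h1 h2 h3 hmin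
      obtain ⟨k, rfl⟩ : ∃ j, k = j + 1 := ⟨k - 1, by omega⟩
      have hsub : greedySet v c k ⊆ W := by
        refine aux_sub v c W k fun s hs1 hs2 => ?_
        refine aux_mem v O α c s hs1 (by omega) ?_
        by_contra hcon
        exact hmin s (by omega) ⟨⟨hs1, by omega⟩, hcon⟩
      have h4 : v (greedySet v c (k + 1)) ≤ v (greedySet v c k) + v {agent v c (k + 1)} :=
        aux_insert v hv0 hvmono hvsub _ _
      have h5 := hvmono _ _ hsub
      have h6 := aux_opt v hv0 hvmono hvsub B hB c hc (agent v c (k + 1))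
      have h7 := histar (agent v c (k + 1))
      have h8 := (hO (Finset.univ.erase (agent v c (k + 1)))).2
      push Not at h3
      have h9 : r * (α * O c (Finset.univ.erase (agent v c (k + 1)))) ≤ r * (v W + v {istar}) :=
        mul_le_mul_of_nonneg_left (by linarith) (by linarith)
      have h10 := mul_le_mul_of_nonneg_left h8 hα0.le
      have h11 : α * optVal v c B Finset.univ ≤
          α * (optVal v c B (Finset.univ.erase (agent v c (k + 1))) + v {istar}) :=
        mul_le_mul_of_nonneg_left (by linarith) hα0.le
      linarith
    · push Not at h
      have hsub : greedySet v c (Fintype.card ι) ⊆ W :=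
        aux_sub v c W _ fun s hs1 hs2 => aux_mem v O α c s hs1 hs2 (h s ⟨hs1, hs2⟩)
      have hcard := (aux_card v c _ le_rfl).trans (Finset.card_le_card hsub)
      have huniv : W = Finset.univ :=
        (Finset.card_eq_iff_eq_univ W).mp (le_antisymm (Finset.card_le_univ W) hcard)
      have hle : optVal v c B Finset.univ ≤ v W := by
        refine csSup_le ⟨v ∅, ∅, ⟨by simp, by simpa using hB.le⟩, rfl⟩ ?_
        rintro _ ⟨S, -, rfl⟩
        rw [huniv]; exact hvmono _ _ (Finset.subset_univ _)
      have h1 := mul_le_mul_of_nonneg_left hle hα0.le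
      have h2 : α * v W ≤ r * v W := mul_le_mul_of_nonneg_right (by linarith) hW0
      have h3 : 0 ≤ (α + r) * v {istar} := mul_nonneg (by linarith) hi0
      linarith
  have heq : (1 + 2 * r / α) * (r / (α + 2 * r) * v W + (α + r) / (α + 2 * r) * v {istar})
      = (r * v W + (α + r) * v {istar}) / α := by
    field_simp
  rw [heq, ge_iff_le, le_div_iff₀ hα0]
  linarith
end
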